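/- In the gluing setup, for every f ∈ 𝔉, every x ∈ V_f \ V_p, and every y ∈ V_p \ V_f, we have d̂(x,y) − ď(x,y) ≥ min{ Λ(x; V_f ∩ V_p), (1/2)·Λ(y; V_p ∩ V_f) }, where Λ(v;B) = inf{ d̂(a,v) + d̂(v,b) − d̂(a,b) : a,b ∈ B }. -/

import Mathlib

/-!
The distance `d̂(x, ·)` is the largest function vanishing at `x` that is 1-Lipschitz along the
edges. Lower bounds for `d̂` therefore come from exhibiting such functions, and no walk has to be
cut into pieces.

A 1-Lipschitz function on the base or on a piece has a McShane extension to each neighbouring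
piece, and the extensions fit together over the glued graph. Hence gluing does not shrink
distances, and the glued weight is again a graph pseudometric. Its graph is separated by
`V_f ∩ V_p` into `f` and the graph glued from `p` and the other pieces.

For a separation `(P, Q)` and `x ∈ P`, a 1-Lipschitz function that is at most `d̂(x, ·)` on `P ∩ Q`
is at most `d̂(x, ·)` on all of `Q`, since truncating it from below by `d̂(x, ·)` on `Q` and
continuing it by `d̂(x, ·)` on `P` keeps it 1-Lipschitz. So the infimum `Λ(x; P ∩ Q)` bounds
`d̂(a,x) + d̂(x,b) - d̂(a,b)` for all `a, b ∈ Q`. The estimate of `ď(x,y)` is then a triangle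
inequality for each edge `ab`, using `Λ(x)` if `a, b ∈ Q` and `Λ(y)` if `a, b ∈ P`.
-/

open scoped Classical

universe u

namespace GraphMetricPaper

variable {X : Type u}

/-- The vertex set `V = ⋃ E` of a graph given by an adjacency relation `E`. -/
def Vtx (E : X → X → Prop) : Set X := {x | ∃ y, E x y}

/-- Two points are joined by a walk in the graph `E`. -/
def Joined (E : X → X → Prop) (x y : X) : Prop :=
  ∃ (n : ℕ) (c : ℕ → X), c 0 = x ∧ c n = y ∧ ∀ i, i < n → E (c i) (c (i + 1))

/-- The set of weights of walks from `x` to `y`. -/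
def walkSums (E : X → X → Prop) (d : X → X → ℝ) (x y : X) : Set ℝ :=
  {s | ∃ (n : ℕ) (c : ℕ → X), c 0 = x ∧ c n = y ∧ (∀ i, i < n → E (c i) (c (i + 1))) ∧
    s = ∑ i ∈ Finset.range n, d (c i) (c (i + 1))}

/-- The shortest-path pseudometric `d̂` determined by a weight function `d` on a graph `E`. -/
noncomputable def hatd (E : X → X → Prop) (d : X → X → ℝ) (x y : X) : ℝ :=
  sInf (walkSums E d x y)

/-- The function `ď` bounding the possible extensions of `d` from below:
`ď(x,y) = sup_{ab ∈ E} max {0, d(ab) - d̂(a,x) - d̂(y,b)}`. -/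
noncomputable def checkd (E : X → X → Prop) (d : X → X → ℝ) (x y : X) : ℝ :=
  sSup ({0} ∪ {r | ∃ a b, E a b ∧ r = d a b - hatd E d a x - hatd E d y b})

/-- The pseudometric `d̈` on doubletons:
`d̈(xy,uv) = min {d̂(x,u) + d̂(y,v), d̂(x,v) + d̂(y,u)}`. -/
noncomputable def ddot (E : X → X → Prop) (d : X → X → ℝ) (x y u v : X) : ℝ :=
  min (hatd E d x u + hatd E d y v) (hatd E d x v + hatd E d y u)

/-- `d` is a graph pseudometric with edge relation `E`:  `E` is a (symmetric, irreflexive)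
connected graph, `d` is a nonnegative symmetric weight on the edges, and `d = d̂` on edges. -/
structure IsGraphPseudometric (E : X → X → Prop) (d : X → X → ℝ) : Prop where
  symm : ∀ ⦃a b⦄, E a b → E b a
  irrefl : ∀ a, ¬ E a a
  wt_symm : ∀ ⦃a b⦄, E a b → d a b = d b a
  nonneg : ∀ ⦃a b⦄, E a b → 0 ≤ d a b
  connected : ∀ x ∈ Vtx E, ∀ y ∈ Vtx E, Joined E x y
  edge_eq : ∀ ⦃a b⦄, E a b → d a b = hatd E d a b

/-- A graph metric is a graph pseudometric with strictly positive weights. -/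
def IsGraphMetric (E : X → X → Prop) (d : X → X → ℝ) : Prop :=
  IsGraphPseudometric E d ∧ ∀ ⦃a b⦄, E a b → 0 < d a b

/-- A floppy graph pseudometric: `ď(x,y) < d̂(x,y)` for every `xy ∈ [V]² \ E`. -/
def FloppyPseudometric (E : X → X → Prop) (d : X → X → ℝ) : Prop :=
  IsGraphPseudometric E d ∧
    ∀ x ∈ Vtx E, ∀ y ∈ Vtx E, x ≠ y → ¬ E x y → checkd E d x y < hatd E d x y

/-- A floppy graph metric: `ď(x,y) < d̂(x,y)` for every `xy ∈ [V]² \ E`. -/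
def FloppyMetric (E : X → X → Prop) (d : X → X → ℝ) : Prop :=
  IsGraphMetric E d ∧
    ∀ x ∈ Vtx E, ∀ y ∈ Vtx E, x ≠ y → ¬ E x y → checkd E d x y < hatd E d x y

/-- The edge relation of the one-step extension `E ∪ {xy}`. -/
def extEdge (E : X → X → Prop) (x y : X) : X → X → Prop :=
  fun a b => E a b ∨ (a = x ∧ b = y) ∨ (a = y ∧ b = x)

/-- The weight function of the one-step extension `d ∪ {⟨xy, r⟩}`. -/
noncomputable def extWt (d : X → X → ℝ) (x y : X) (r : ℝ) : X → X → ℝ :=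
  fun a b => if (a = x ∧ b = y) ∨ (a = y ∧ b = x) then r else d a b

/-- The set `[V]² \ E` of unordered pairs of distinct vertices that are not edges. -/
def nonEdgePairs (E : X → X → Prop) : Set (Sym2 X) :=
  {e | ∃ a b : X, e = s(a, b) ∧ a ≠ b ∧ a ∈ Vtx E ∧ b ∈ Vtx E ∧ ¬ E a b}

/-- A set of (unordered) weighted pairs, presented as a relation `R`, is a full metric
on `V`: it is symmetric, its domain is exactly `[V]²`, it is single-valued, positive,
and satisfies the triangle inequality. -/
def IsFullMetricRel (V : Set X) (R : X → X → ℝ → Prop) : Prop :=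
  (∀ a b r, R a b r → R b a r) ∧
  (∀ a b r, R a b r → a ∈ V ∧ b ∈ V ∧ a ≠ b) ∧
  (∀ a b, a ∈ V → b ∈ V → a ≠ b → ∃ r, R a b r) ∧
  (∀ a b r s, R a b r → R a b s → r = s) ∧
  (∀ a b r, R a b r → 0 < r) ∧
  (∀ a b c r s t, R a b r → R b c s → R a c t → t ≤ r + s)

/-- A weight function `D` on `[V]²` is a full metric on `V`. -/
def IsFullMetricOn (V : Set X) (D : X → X → ℝ) : Prop :=
  (∀ a b, a ∈ V → b ∈ V → a ≠ b → D a b = D b a) ∧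
  (∀ a b, a ∈ V → b ∈ V → a ≠ b → 0 < D a b) ∧
  (∀ a b c, a ∈ V → b ∈ V → c ∈ V → a ≠ b → b ≠ c → a ≠ c → D a c ≤ D a b + D b c)

/-- Player I has a winning strategy in the metric-extending game `Game_d(lam, Fam)`:
there are functions `S1, S2` choosing, for each inning `β < lam` and each sequence of
previous answers of player II, a legal doubleton in `[V]²` and a set from `Fam`, such that
for every play of player II respecting the strategy, the resulting relation
`d ∪ {⟨x_α y_α, r_α⟩ : α < lam}` is a full metric on `V`. -/
def WinningStratI (V : Set X) (E : X → X → Prop) (d : X → X → ℝ)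
    (lam : Ordinal.{u}) (Fam : Set (Set ℝ)) : Prop :=
  ∃ (S1 : ∀ β : Ordinal.{u}, β < lam → (∀ α : Ordinal.{u}, α < β → ℝ) → X × X)
    (S2 : ∀ β : Ordinal.{u}, β < lam → (∀ α : Ordinal.{u}, α < β → ℝ) → Set ℝ),
    (∀ β hβ s, S2 β hβ s ∈ Fam) ∧
    (∀ β hβ s, (S1 β hβ s).1 ∈ V ∧ (S1 β hβ s).2 ∈ V ∧ (S1 β hβ s).1 ≠ (S1 β hβ s).2) ∧
    (∀ s : ∀ α : Ordinal.{u}, α < lam → ℝ,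
      (∀ α (hα : α < lam), s α hα ∈ S2 α hα (fun γ hγ => s γ (hγ.trans hα))) →
      IsFullMetricRel V (fun a b r =>
        (E a b ∧ r = d a b) ∨
        ∃ α, ∃ hα : α < lam,
          ((a = (S1 α hα (fun γ hγ => s γ (hγ.trans hα))).1 ∧
            b = (S1 α hα (fun γ hγ => s γ (hγ.trans hα))).2) ∨
           (a = (S1 α hα (fun γ hγ => s γ (hγ.trans hα))).2 ∧
            b = (S1 α hα (fun γ hγ => s γ (hγ.trans hα))).1)) ∧
          r = s α hα))

/-- Player II has a winning strategy in the metric-extending game `Game_d(lam, Fam)`: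
there is a function `T` assigning to each inning `β < lam` and each sequence of moves of
player I (of length `β + 1`) an answer in the set component of the last move, such that
for every legal play of player I, the resulting relation is not a full metric on `V`. -/
def WinningStratII (V : Set X) (E : X → X → Prop) (d : X → X → ℝ)
    (lam : Ordinal.{u}) (Fam : Set (Set ℝ)) : Prop :=
  ∃ T : ∀ β : Ordinal.{u}, β < lam → (∀ α : Ordinal.{u}, α ≤ β → (X × X) × Set ℝ) → ℝ,
    (∀ β hβ p, (p β le_rfl).2 ∈ Fam → T β hβ p ∈ (p β le_rfl).2) ∧
    (∀ p : ∀ α : Ordinal.{u}, α < lam → (X × X) × Set ℝ,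
      (∀ α hα, (p α hα).1.1 ∈ V ∧ (p α hα).1.2 ∈ V ∧ (p α hα).1.1 ≠ (p α hα).1.2 ∧
        (p α hα).2 ∈ Fam) →
      ¬ IsFullMetricRel V (fun a b r =>
        (E a b ∧ r = d a b) ∨
        ∃ α, ∃ hα : α < lam,
          ((a = (p α hα).1.1 ∧ b = (p α hα).1.2) ∨
           (a = (p α hα).1.2 ∧ b = (p α hα).1.1)) ∧
          r = T α hα (fun γ hγ => p γ (lt_of_le_of_lt hγ hα))))

/-- The edge relation of the glued graph `E_d = E_p ∪ ⋃_{f ∈ F} E_f`. -/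
def gluedEdge (Ep : X → X → Prop) (F : Set ((X → X → Prop) × (X → X → ℝ))) :
    X → X → Prop :=
  fun a b => Ep a b ∨ ∃ f ∈ F, f.1 a b

/-- `Λ(v; B) = inf {d̂(a,v) + d̂(v,b) - d̂(a,b) : a, b ∈ B}`. -/
noncomputable def Lam (E : X → X → Prop) (d : X → X → ℝ) (v : X) (B : Set X) : ℝ :=
  sInf {r | ∃ a ∈ B, ∃ b ∈ B, r = hatd E d a v + hatd E d v b - hatd E d a b}

/-- The gluing setup: a graph pseudometric `p = (Ep, wp)` and a family `F` of graph
pseudometrics such that each member meets `V_p`, agrees with `p̂` on the intersection of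
the vertex sets, and distinct members only meet inside `V_p`; `wd` is the glued weight
function `d = p ∪ ⋃ F` on `E_d = E_p ∪ ⋃_{f ∈ F} E_f`. -/
structure GluingSetup (Ep : X → X → Prop) (wp : X → X → ℝ)
    (F : Set ((X → X → Prop) × (X → X → ℝ))) (wd : X → X → ℝ) : Prop where
  hp : IsGraphPseudometric Ep wp
  hF : ∀ f ∈ F, IsGraphPseudometric f.1 f.2
  meet : ∀ f ∈ F, (Vtx f.1 ∩ Vtx Ep).Nonempty
  agree : ∀ f ∈ F, ∀ x ∈ Vtx f.1 ∩ Vtx Ep, ∀ y ∈ Vtx f.1 ∩ Vtx Ep, x ≠ y →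
    hatd f.1 f.2 x y = hatd Ep wp x y
  inter_sub : ∀ f ∈ F, ∀ g ∈ F, f ≠ g → Vtx f.1 ∩ Vtx g.1 ⊆ Vtx Ep
  wd_p : ∀ ⦃a b⦄, Ep a b → wd a b = wp a b
  wd_F : ∀ f ∈ F, ∀ ⦃a b⦄, f.1 a b → wd a b = f.2 a b

section Walks

variable {E : X → X → Prop} {d : X → X → ℝ} {x y z : X} {s : ℝ}

theorem zero_mem_walkSums (E : X → X → Prop) (d : X → X → ℝ) (x : X) : 0 ∈ walkSums E d x x :=
  ⟨0, fun _ => x, rfl, rfl, by simp, by simp⟩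

theorem add_mem_walkSums (hs : s ∈ walkSums E d x y) (hyz : E y z) :
    s + d y z ∈ walkSums E d x z := by
  obtain ⟨n, c, rfl, rfl, hE, rfl⟩ := hs
  have update_eq (i : ℕ) (hi : i ≤ n) : Function.update c (n + 1) z i = c i :=
    Function.update_of_ne (by omega) z c
  refine ⟨n + 1, Function.update c (n + 1) z, update_eq 0 n.zero_le, Function.update_self ..,
    fun i hi => ?_, ?_⟩
  · rcases Nat.lt_succ_iff_lt_or_eq.mp hi with hin | rfl
    · rw [update_eq i hin.le, update_eq (i + 1) hin]
      exact hE i hin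
    · rwa [update_eq i le_rfl, Function.update_self]
  · rw [Finset.sum_range_succ, update_eq n le_rfl, Function.update_self]
    congr 1
    refine Finset.sum_congr rfl fun i hi => ?_
    have hin := Finset.mem_range.mp hi
    rw [update_eq i hin.le, update_eq (i + 1) hin]

theorem joined_iff_nonempty_walkSums (d : X → X → ℝ) :
    Joined E x y ↔ (walkSums E d x y).Nonempty := by
  constructor
  · rintro ⟨n, c, h0, hn, hE⟩
    exact ⟨_, n, c, h0, hn, hE, rfl⟩
  · rintro ⟨_, n, c, h0, hn, hE, -⟩
    exact ⟨n, c, h0, hn, hE⟩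

theorem joined_iff_reflTransGen : Joined E x y ↔ Relation.ReflTransGen E x y := by
  constructor
  · rintro ⟨n, c, rfl, rfl, hE⟩
    exact Relation.ReflTransGen.lift c (fun _ _ h => h) _ _ <|
      reflTransGen_of_succ_of_le (fun i j => E (c i) (c j)) (fun i hi => hE i hi.2) n.zero_le
  · intro h
    rw [joined_iff_nonempty_walkSums 0]
    induction h with
    | refl => exact ⟨0, zero_mem_walkSums E 0 x⟩
    | tail _ hE ih =>
      obtain ⟨s, hs⟩ := ih
      exact ⟨_, add_mem_walkSums hs hE⟩

theorem nonneg_of_mem_walkSums (hd : ∀ ⦃a b⦄, E a b → 0 ≤ d a b) (hs : s ∈ walkSums E d x y) :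
    0 ≤ s := by
  obtain ⟨n, c, -, -, hE, rfl⟩ := hs
  exact Finset.sum_nonneg fun i hi => hd (hE i (Finset.mem_range.mp hi))

theorem hatd_le_of_mem_walkSums (hd : ∀ ⦃a b⦄, E a b → 0 ≤ d a b) (hs : s ∈ walkSums E d x y) :
    hatd E d x y ≤ s :=
  csInf_le ⟨0, fun _ => nonneg_of_mem_walkSums hd⟩ hs

theorem hatd_nonneg (hd : ∀ ⦃a b⦄, E a b → 0 ≤ d a b) (x y : X) : 0 ≤ hatd E d x y :=
  Real.sInf_nonneg fun _ => nonneg_of_mem_walkSums hd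

theorem hatd_self (hd : ∀ ⦃a b⦄, E a b → 0 ≤ d a b) (x : X) : hatd E d x x = 0 :=
  le_antisymm (hatd_le_of_mem_walkSums hd (zero_mem_walkSums E d x)) (hatd_nonneg hd x x)

theorem hatd_le_hatd_add (hd : ∀ ⦃a b⦄, E a b → 0 ≤ d a b) (hxy : Joined E x y) (hyz : E y z) :
    hatd E d x z ≤ hatd E d x y + d y z := by
  rw [← sub_le_iff_le_add]
  refine le_csInf ((joined_iff_nonempty_walkSums d).mp hxy) fun s hs => ?_
  rw [sub_le_iff_le_add]
  exact hatd_le_of_mem_walkSums hd (add_mem_walkSums hs hyz)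

theorem hatd_le_of_edge (hd : ∀ ⦃a b⦄, E a b → 0 ≤ d a b) (hxy : E x y) : hatd E d x y ≤ d x y := by
  simpa only [zero_add] using
    hatd_le_of_mem_walkSums hd (add_mem_walkSums (zero_mem_walkSums E d x) hxy)

theorem checkd_le {r : ℝ} (hr : 0 ≤ r)
    (hE : ∀ a b, E a b → d a b - hatd E d a x - hatd E d y b ≤ r) : checkd E d x y ≤ r := by
  refine csSup_le ⟨0, .inl rfl⟩ ?_
  rintro _ (rfl | ⟨a, b, hab, rfl⟩)
  · exact hr
  · exact hE a b hab

end Walks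

/-- A function that is 1-Lipschitz along the edges of the graph `E` weighted by `d`. The condition
is stated for directed edges, which amounts to `|φ b - φ a| ≤ d a b` when `E` and `d` are symmetric.
Such functions give lower bounds for `d̂`. -/
def EdgeLipschitz (E : X → X → Prop) (d : X → X → ℝ) (φ : X → ℝ) : Prop :=
  ∀ ⦃a b⦄, E a b → φ b ≤ φ a + d a b

namespace EdgeLipschitz

variable {E : X → X → Prop} {d : X → X → ℝ} {φ : X → ℝ} {x y : X}

theorem const_add (hφ : EdgeLipschitz E d φ) (k : ℝ) : EdgeLipschitz E d (fun v => k + φ v) :=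
  fun a b hab => by linarith [hφ hab]

theorem le_add_hatd (hφ : EdgeLipschitz E d φ) (hxy : Joined E x y) :
    φ y ≤ φ x + hatd E d x y := by
  rw [← sub_le_iff_le_add']
  refine le_csInf ((joined_iff_nonempty_walkSums d).mp hxy) ?_
  rintro _ ⟨n, c, rfl, rfl, hE, rfl⟩
  rw [← Finset.sum_range_sub (fun i => φ (c i))]
  exact Finset.sum_le_sum fun i hi =>
    sub_le_iff_le_add'.mpr (hφ (hE i (Finset.mem_range.mp hi)))

end EdgeLipschitz

namespace IsGraphPseudometric

variable {E : X → X → Prop} {d : X → X → ℝ} {x y z : X}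

theorem right_mem_vtx (h : IsGraphPseudometric E d) (hxy : E x y) : y ∈ Vtx E := ⟨x, h.symm hxy⟩

theorem edgeLipschitz_hatd (h : IsGraphPseudometric E d) (hx : x ∈ Vtx E) :
    EdgeLipschitz E d (hatd E d x) :=
  fun a b hab => hatd_le_hatd_add h.nonneg (h.connected x hx a ⟨b, hab⟩) hab

theorem hatd_triangle (h : IsGraphPseudometric E d) (hx : x ∈ Vtx E) (hy : y ∈ Vtx E)
    (hz : z ∈ Vtx E) : hatd E d x z ≤ hatd E d x y + hatd E d y z :=
  (h.edgeLipschitz_hatd hx).le_add_hatd (h.connected y hy z hz)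

theorem hatd_comm (h : IsGraphPseudometric E d) (hx : x ∈ Vtx E) (hy : y ∈ Vtx E) :
    hatd E d x y = hatd E d y x := by
  suffices hle : ∀ u ∈ Vtx E, ∀ v ∈ Vtx E, hatd E d v u ≤ hatd E d u v from
    le_antisymm (hle y hy x hx) (hle x hx y hy)
  intro u hu v hv
  have hneg : EdgeLipschitz E d (fun w => -hatd E d v w) := fun a b hab => by
    linarith [h.edgeLipschitz_hatd hv (h.symm hab), h.wt_symm hab]
  linarith [hneg.le_add_hatd (h.connected u hu v hv), hatd_self h.nonneg v]

/-- The vertex set with the shortest-path distance, which makes the Lipschitz extension theorems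
for pseudometric spaces available. -/
noncomputable abbrev toPseudoMetricSpace (h : IsGraphPseudometric E d) :
    PseudoMetricSpace (Vtx E) where
  dist u v := hatd E d u v
  dist_self u := hatd_self h.nonneg u
  dist_comm u v := h.hatd_comm u.2 v.2
  dist_triangle u v w := h.hatd_triangle u.2 v.2 w.2

theorem exists_edgeLipschitz_eqOn (h : IsGraphPseudometric E d) {A : Set X} (hA : A ⊆ Vtx E)
    {φ : X → ℝ} (hφ : ∀ u ∈ A, ∀ v ∈ A, φ v ≤ φ u + hatd E d u v) :
    ∃ ψ, EdgeLipschitz E d ψ ∧ Set.EqOn ψ φ A := by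
  let := h.toPseudoMetricSpace
  have hlip : LipschitzOnWith 1 (fun v : Vtx E => φ v) (Subtype.val ⁻¹' A) :=
    LipschitzOnWith.of_le_add fun v hv u hu => by
      rw [dist_comm]
      exact hφ u hu v hv
  obtain ⟨ψ, hψ, hψφ⟩ := hlip.extend_real
  have hext (v : Vtx E) : Function.extend Subtype.val ψ 0 v = ψ v :=
    Subtype.val_injective.extend_apply ψ 0 v
  refine ⟨Function.extend Subtype.val ψ 0, fun a b hab => ?_, fun v hv => ?_⟩
  · have hψab := hψ.le_add_mul ⟨b, h.right_mem_vtx hab⟩ ⟨a, b, hab⟩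
    rw [NNReal.coe_one, one_mul, dist_comm] at hψab
    rw [h.edge_eq hab, hext ⟨a, b, hab⟩, hext ⟨b, h.right_mem_vtx hab⟩]
    exact hψab
  · exact (hext ⟨v, hA hv⟩).trans (hψφ (x := ⟨v, hA hv⟩) hv).symm

theorem hatd_le_hatd_of_forall_edgeLipschitz_extends (h : IsGraphPseudometric E d)
    {G : X → X → Prop} {w : X → X → ℝ}
    (hext : ∀ φ, EdgeLipschitz E d φ → ∃ χ, EdgeLipschitz G w χ ∧ Set.EqOn χ φ (Vtx E))
    (hx : x ∈ Vtx E) (hy : y ∈ Vtx E) (hxy : Joined G x y) : hatd E d x y ≤ hatd G w x y := by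
  obtain ⟨χ, hχ, hχd⟩ := hext _ (h.edgeLipschitz_hatd hx)
  have hle := hχ.le_add_hatd hxy
  rwa [hχd hx, hχd hy, hatd_self h.nonneg, zero_add] at hle

theorem lam_nonneg (h : IsGraphPseudometric E d) {B : Set X} (hB : B ⊆ Vtx E) (hx : x ∈ Vtx E) :
    0 ≤ Lam E d x B := by
  refine Real.sInf_nonneg ?_
  rintro _ ⟨a, ha, b, hb, rfl⟩
  exact sub_nonneg.mpr (h.hatd_triangle (hB ha) hx (hB hb))

theorem lam_le (h : IsGraphPseudometric E d) {B : Set X} (hB : B ⊆ Vtx E) (hx : x ∈ Vtx E)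
    {a b : X} (ha : a ∈ B) (hb : b ∈ B) :
    Lam E d x B ≤ hatd E d a x + hatd E d x b - hatd E d a b := by
  refine csInf_le ⟨0, ?_⟩ ⟨a, ha, b, hb, rfl⟩
  rintro _ ⟨a, ha, b, hb, rfl⟩
  exact sub_nonneg.mpr (h.hatd_triangle (hB ha) hx (hB hb))

end IsGraphPseudometric

/-- `(P, Q)` is a separation of the graph `E` with separator `P ∩ Q`: no edge joins `P \ Q` to
`Q \ P`. That `P` and `Q` cover the vertex set follows from `edge`. -/
structure IsSeparation (E : X → X → Prop) (P Q : Set X) : Prop where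
  left_subset : P ⊆ Vtx E
  right_subset : Q ⊆ Vtx E
  edge : ∀ ⦃a b⦄, E a b → a ∈ P ∧ b ∈ P ∨ a ∈ Q ∧ b ∈ Q

namespace IsSeparation

variable {E : X → X → Prop} {d : X → X → ℝ} {P Q : Set X} {a b x y : X}

protected theorem symm (hPQ : IsSeparation E P Q) : IsSeparation E Q P :=
  ⟨hPQ.right_subset, hPQ.left_subset, fun _ _ hab => (hPQ.edge hab).symm⟩

theorem le_hatd_of_le_on_inter (hPQ : IsSeparation E P Q) (h : IsGraphPseudometric E d)
    {φ : X → ℝ} (hφ : EdgeLipschitz E d φ) (hx : x ∈ P) (hle : ∀ c ∈ P ∩ Q, φ c ≤ hatd E d x c)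
    (hy : y ∈ Q) : φ y ≤ hatd E d x y := by
  have hxV := hPQ.left_subset hx
  have hd := h.edgeLipschitz_hatd hxV
  let χ : X → ℝ := fun v => if v ∈ Q then max (hatd E d x v) (φ v) else hatd E d x v
  have hχQ (v : X) (hv : v ∈ Q) : χ v = max (hatd E d x v) (φ v) := if_pos hv
  have hχP (v : X) (hv : v ∈ P) : χ v = hatd E d x v := by
    by_cases hvQ : v ∈ Q
    · rw [hχQ v hvQ, max_eq_left (hle v ⟨hv, hvQ⟩)]
    · exact if_neg hvQ
  have hχ : EdgeLipschitz E d χ := fun a b hab => by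
    rcases hPQ.edge hab with ⟨ha, hb⟩ | ⟨ha, hb⟩
    · rw [hχP a ha, hχP b hb]
      exact hd hab
    · rw [hχQ a ha, hχQ b hb, ← max_add_add_right]
      exact max_le_max (hd hab) (hφ hab)
  calc φ y ≤ χ y := (le_max_right _ _).trans_eq (hχQ y hy).symm
    _ ≤ χ x + hatd E d x y := hχ.le_add_hatd (h.connected x hxV y (hPQ.right_subset hy))
    _ = hatd E d x y := by rw [hχP x hx, hatd_self h.nonneg, zero_add]

theorem lam_inter_le (hPQ : IsSeparation E P Q) (h : IsGraphPseudometric E d) (hx : x ∈ P)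
    (ha : a ∈ Q) (hb : b ∈ Q) :
    Lam E d x (P ∩ Q) ≤ hatd E d a x + hatd E d x b - hatd E d a b := by
  have hxV := hPQ.left_subset hx
  have hQ {c : X} (hc : c ∈ Q) : c ∈ Vtx E := hPQ.right_subset hc
  have lam_le_of_inter (c : X) (hc : c ∈ P ∩ Q) :
      Lam E d x (P ∩ Q) ≤ hatd E d c x + hatd E d x b - hatd E d c b := by
    have := hPQ.le_hatd_of_le_on_inter h
      ((h.edgeLipschitz_hatd (hQ hc.2)).const_add (Lam E d x (P ∩ Q) - hatd E d c x)) hx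
      (fun e he => by linarith [h.lam_le (fun _ hv => hQ hv.2) hxV hc he]) hb
    linarith
  have := hPQ.le_hatd_of_le_on_inter h
    ((h.edgeLipschitz_hatd (hQ hb)).const_add (Lam E d x (P ∩ Q) - hatd E d x b)) hx
    (fun c hc => by
      linarith [lam_le_of_inter c hc, h.hatd_comm (hQ hc.2) hxV, h.hatd_comm (hQ hb) (hQ hc.2)]) ha
  linarith [h.hatd_comm (hQ ha) hxV, h.hatd_comm (hQ ha) (hQ hb)]

theorem lam_inter_le_two_mul_hatd (hPQ : IsSeparation E P Q) (h : IsGraphPseudometric E d)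
    (hx : x ∈ P) (hy : y ∈ Q) : Lam E d x (P ∩ Q) ≤ 2 * hatd E d x y := by
  linarith [hPQ.lam_inter_le h hx hy hy, hatd_self h.nonneg y,
    h.hatd_comm (hPQ.left_subset hx) (hPQ.right_subset hy)]

theorem hatd_sub_sub_le_of_mem_right (hPQ : IsSeparation E P Q) (h : IsGraphPseudometric E d)
    (hx : x ∈ P) (hy : y ∈ Q) (ha : a ∈ Q) (hb : b ∈ Q) :
    hatd E d a b - hatd E d a x - hatd E d y b ≤ hatd E d x y - Lam E d x (P ∩ Q) := by
  have hQ := hPQ.right_subset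
  linarith [hPQ.lam_inter_le h hx ha hy, h.hatd_triangle (hQ ha) (hQ hy) (hQ hb)]

theorem hatd_sub_sub_le_of_mem_left (hPQ : IsSeparation E P Q) (h : IsGraphPseudometric E d)
    (hx : x ∈ P) (hy : y ∈ Q) (ha : a ∈ P) (hb : b ∈ P) :
    hatd E d a b - hatd E d a x - hatd E d y b ≤ hatd E d x y - Lam E d y (P ∩ Q) := by
  have hP := hPQ.left_subset
  rw [Set.inter_comm]
  linarith [hPQ.symm.lam_inter_le h hy hx hb, h.hatd_triangle (hP ha) (hP hx) (hP hb)]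

end IsSeparation

namespace GluingSetup

variable {Ep : X → X → Prop} {wp : X → X → ℝ} {F : Set ((X → X → Prop) × (X → X → ℝ))}
  {wd : X → X → ℝ} {f : (X → X → Prop) × (X → X → ℝ)} {u v : X}

theorem gluedEdge_symm (hs : GluingSetup Ep wp F wd) (huv : gluedEdge Ep F u v) :
    gluedEdge Ep F v u := by
  rcases huv with huv | ⟨f, hf, huv⟩
  · exact .inl (hs.hp.symm huv)
  · exact .inr ⟨f, hf, (hs.hF f hf).symm huv⟩

theorem exists_base_reflTransGen (hs : GluingSetup Ep wp F wd) (hu : u ∈ Vtx (gluedEdge Ep F)) :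
    ∃ c ∈ Vtx Ep, Relation.ReflTransGen (gluedEdge Ep F) u c := by
  obtain ⟨v, huv | ⟨f, hf, huv⟩⟩ := hu
  · exact ⟨u, ⟨v, huv⟩, .refl⟩
  · obtain ⟨c, hcf, hcp⟩ := hs.meet f hf
    have huc := joined_iff_reflTransGen.mp ((hs.hF f hf).connected u ⟨v, huv⟩ c hcf)
    exact ⟨c, hcp, Relation.ReflTransGen.mono (fun _ _ hab => .inr ⟨f, hf, hab⟩) _ _ huc⟩

theorem joined_gluedEdge (hs : GluingSetup Ep wp F wd) (hu : u ∈ Vtx (gluedEdge Ep F))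
    (hv : v ∈ Vtx (gluedEdge Ep F)) : Joined (gluedEdge Ep F) u v := by
  obtain ⟨a, ha, hua⟩ := hs.exists_base_reflTransGen hu
  obtain ⟨b, hb, hvb⟩ := hs.exists_base_reflTransGen hv
  have hab := joined_iff_reflTransGen.mp (hs.hp.connected a ha b hb)
  have : Std.Symm (gluedEdge Ep F) := ⟨fun _ _ => hs.gluedEdge_symm⟩
  have hab_glued := Relation.ReflTransGen.mono (p := gluedEdge Ep F) (fun _ _ => .inl) _ _ hab
  exact joined_iff_reflTransGen.mpr ((hua.trans hab_glued).trans (Std.Symm.symm _ _ hvb))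

theorem hatd_piece_eq_hatd_base (hs : GluingSetup Ep wp F wd) (hf : f ∈ F)
    (hu : u ∈ Vtx f.1 ∩ Vtx Ep) (hv : v ∈ Vtx f.1 ∩ Vtx Ep) :
    hatd f.1 f.2 u v = hatd Ep wp u v := by
  rcases eq_or_ne u v with rfl | hne
  · rw [hatd_self (hs.hF f hf).nonneg, hatd_self hs.hp.nonneg]
  · exact hs.agree f hf u hu v hv hne

theorem exists_eqOn_of_eqOn_inter (hs : GluingSetup Ep wp F wd) {φ : X → ℝ}
    {ψ : (X → X → Prop) × (X → X → ℝ) → X → ℝ}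
    (hψφ : ∀ f ∈ F, Set.EqOn (ψ f) φ (Vtx f.1 ∩ Vtx Ep)) :
    ∃ χ : X → ℝ, Set.EqOn χ φ (Vtx Ep) ∧ ∀ f ∈ F, Set.EqOn χ (ψ f) (Vtx f.1) := by
  let χ : X → ℝ := fun v =>
    if v ∈ Vtx Ep then φ v
    else if hv : ∃ g ∈ F, v ∈ Vtx g.1 then ψ hv.choose v else 0
  have hχp : Set.EqOn χ φ (Vtx Ep) := fun v hv => if_pos hv
  refine ⟨χ, hχp, fun f hf v hv => ?_⟩
  by_cases hvp : v ∈ Vtx Ep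
  · exact (hχp hvp).trans (hψφ f hf ⟨hv, hvp⟩).symm
  · have hex : ∃ g ∈ F, v ∈ Vtx g.1 := ⟨f, hf, hv⟩
    have hchoose : hex.choose = f := by
      by_contra hne
      exact hvp (hs.inter_sub _ hex.choose_spec.1 f hf hne ⟨hex.choose_spec.2, hv⟩)
    simp only [χ, if_neg hvp, dif_pos hex, hchoose]

theorem exists_edgeLipschitz_glued (hs : GluingSetup Ep wp F wd) {φ : X → ℝ}
    {ψ : (X → X → Prop) × (X → X → ℝ) → X → ℝ} (hφ : EdgeLipschitz Ep wp φ)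
    (hψ : ∀ f ∈ F, EdgeLipschitz f.1 f.2 (ψ f))
    (hψφ : ∀ f ∈ F, Set.EqOn (ψ f) φ (Vtx f.1 ∩ Vtx Ep)) :
    ∃ χ, EdgeLipschitz (gluedEdge Ep F) wd χ ∧ Set.EqOn χ φ (Vtx Ep) ∧
      ∀ f ∈ F, Set.EqOn χ (ψ f) (Vtx f.1) := by
  obtain ⟨χ, hχp, hχF⟩ := hs.exists_eqOn_of_eqOn_inter hψφ
  refine ⟨χ, ?_, hχp, hχF⟩
  rintro a b (hab | ⟨f, hf, hab⟩)
  · rw [hχp ⟨b, hab⟩, hχp (hs.hp.right_mem_vtx hab), hs.wd_p hab]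
    exact hφ hab
  · rw [hχF f hf ⟨b, hab⟩, hχF f hf ((hs.hF f hf).right_mem_vtx hab), hs.wd_F f hf hab]
    exact hψ f hf hab

theorem exists_edgeLipschitz_piece_of_base (hs : GluingSetup Ep wp F wd) {φ : X → ℝ}
    (hφ : EdgeLipschitz Ep wp φ) (hf : f ∈ F) :
    ∃ ψ, EdgeLipschitz f.1 f.2 ψ ∧ Set.EqOn ψ φ (Vtx f.1 ∩ Vtx Ep) :=
  (hs.hF f hf).exists_edgeLipschitz_eqOn Set.inter_subset_left fun a ha b hb => by
    rw [hs.hatd_piece_eq_hatd_base hf ha hb]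
    exact hφ.le_add_hatd (hs.hp.connected a ha.2 b hb.2)

theorem exists_edgeLipschitz_base_of_piece (hs : GluingSetup Ep wp F wd) {φ : X → ℝ} (hf : f ∈ F)
    (hφ : EdgeLipschitz f.1 f.2 φ) :
    ∃ ψ, EdgeLipschitz Ep wp ψ ∧ Set.EqOn ψ φ (Vtx f.1 ∩ Vtx Ep) :=
  hs.hp.exists_edgeLipschitz_eqOn Set.inter_subset_right fun a ha b hb => by
    rw [← hs.hatd_piece_eq_hatd_base hf ha hb]
    exact hφ.le_add_hatd ((hs.hF f hf).connected a ha.1 b hb.1)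

theorem exists_edgeLipschitz_glued_of_base (hs : GluingSetup Ep wp F wd) {φ : X → ℝ}
    (hφ : EdgeLipschitz Ep wp φ) :
    ∃ χ, EdgeLipschitz (gluedEdge Ep F) wd χ ∧ Set.EqOn χ φ (Vtx Ep) := by
  choose! ψ hψ hψφ using fun f (hf : f ∈ F) => hs.exists_edgeLipschitz_piece_of_base hφ hf
  obtain ⟨χ, hχ, hχp, -⟩ := hs.exists_edgeLipschitz_glued hφ hψ hψφ
  exact ⟨χ, hχ, hχp⟩

theorem exists_edgeLipschitz_glued_of_piece (hs : GluingSetup Ep wp F wd) (hf : f ∈ F) {φ : X → ℝ}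
    (hφ : EdgeLipschitz f.1 f.2 φ) :
    ∃ χ, EdgeLipschitz (gluedEdge Ep F) wd χ ∧ Set.EqOn χ φ (Vtx f.1) := by
  obtain ⟨φp, hφp, hφpφ⟩ := hs.exists_edgeLipschitz_base_of_piece hf hφ
  have hpiece (g) (hg : g ∈ F) : ∃ ψ, EdgeLipschitz g.1 g.2 ψ ∧
      Set.EqOn ψ φp (Vtx g.1 ∩ Vtx Ep) ∧ (g = f → ψ = φ) := by
    rcases eq_or_ne g f with rfl | hne
    · exact ⟨φ, hφ, hφpφ.symm, fun _ => rfl⟩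
    · obtain ⟨ψ, hψ, hψφ⟩ := hs.exists_edgeLipschitz_piece_of_base hφp hg
      exact ⟨ψ, hψ, hψφ, fun h => absurd h hne⟩
  choose! ψ hψ hψφ hψf using hpiece
  obtain ⟨χ, hχ, -, hχF⟩ := hs.exists_edgeLipschitz_glued hφp hψ hψφ
  exact ⟨χ, hχ, hψf f hf rfl ▸ hχF f hf⟩

theorem wd_nonneg (hs : GluingSetup Ep wp F wd) (huv : gluedEdge Ep F u v) : 0 ≤ wd u v := by
  rcases huv with huv | ⟨f, hf, huv⟩
  · exact (hs.hp.nonneg huv).trans_eq (hs.wd_p huv).symm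
  · exact ((hs.hF f hf).nonneg huv).trans_eq (hs.wd_F f hf huv).symm

theorem wd_le_hatd (hs : GluingSetup Ep wp F wd) (huv : gluedEdge Ep F u v) :
    wd u v ≤ hatd (gluedEdge Ep F) wd u v := by
  have hjoined := hs.joined_gluedEdge ⟨v, huv⟩ ⟨u, hs.gluedEdge_symm huv⟩
  rcases huv with huv | ⟨f, hf, huv⟩
  · rw [hs.wd_p huv, hs.hp.edge_eq huv]
    exact hs.hp.hatd_le_hatd_of_forall_edgeLipschitz_extends
      (fun _ => hs.exists_edgeLipschitz_glued_of_base) ⟨v, huv⟩ (hs.hp.right_mem_vtx huv) hjoined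
  · have hfp := hs.hF f hf
    rw [hs.wd_F f hf huv, hfp.edge_eq huv]
    exact hfp.hatd_le_hatd_of_forall_edgeLipschitz_extends
      (fun _ => hs.exists_edgeLipschitz_glued_of_piece hf) ⟨v, huv⟩ (hfp.right_mem_vtx huv) hjoined

theorem isGraphPseudometric (hs : GluingSetup Ep wp F wd) :
    IsGraphPseudometric (gluedEdge Ep F) wd where
  symm _ _ := hs.gluedEdge_symm
  irrefl := by
    rintro a (h | ⟨f, hf, h⟩)
    · exact hs.hp.irrefl a h
    · exact (hs.hF f hf).irrefl a h
  wt_symm := by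
    rintro a b (h | ⟨f, hf, h⟩)
    · rw [hs.wd_p h, hs.wd_p (hs.hp.symm h), hs.hp.wt_symm h]
    · rw [hs.wd_F f hf h, hs.wd_F f hf ((hs.hF f hf).symm h), (hs.hF f hf).wt_symm h]
  nonneg _ _ := hs.wd_nonneg
  connected _ hx _ hy := hs.joined_gluedEdge hx hy
  edge_eq _ _ hab := le_antisymm (hs.wd_le_hatd hab) (hatd_le_of_edge (fun _ _ => hs.wd_nonneg) hab)

protected theorem mono (hs : GluingSetup Ep wp F wd) {F' : Set ((X → X → Prop) × (X → X → ℝ))}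
    (hF' : F' ⊆ F) : GluingSetup Ep wp F' wd where
  hp := hs.hp
  hF f hf := hs.hF f (hF' hf)
  meet f hf := hs.meet f (hF' hf)
  agree f hf := hs.agree f (hF' hf)
  inter_sub f hf g hg := hs.inter_sub f (hF' hf) g (hF' hg)
  wd_p := hs.wd_p
  wd_F f hf := hs.wd_F f (hF' hf)

theorem inter_vtx_gluedEdge_diff (hs : GluingSetup Ep wp F wd) (hf : f ∈ F) :
    Vtx f.1 ∩ Vtx (gluedEdge Ep (F \ {f})) = Vtx f.1 ∩ Vtx Ep := by
  ext v
  constructor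
  · rintro ⟨hvf, w, hvw | ⟨g, hg, hvw⟩⟩
    · exact ⟨hvf, w, hvw⟩
    · exact ⟨hvf, hs.inter_sub f hf g hg.1 (Ne.symm hg.2) ⟨hvf, w, hvw⟩⟩
  · rintro ⟨hvf, w, hvw⟩
    exact ⟨hvf, w, .inl hvw⟩

theorem isSeparation (hs : GluingSetup Ep wp F wd) (hf : f ∈ F) :
    IsSeparation (gluedEdge Ep F) (Vtx f.1) (Vtx (gluedEdge Ep (F \ {f}))) where
  left_subset := fun _ ⟨w, h⟩ => ⟨w, .inr ⟨f, hf, h⟩⟩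
  right_subset := fun _ ⟨w, h⟩ => ⟨w, h.imp_right fun ⟨g, hg, hgw⟩ => ⟨g, hg.1, hgw⟩⟩
  edge a b hab := by
    by_cases hfab : f.1 a b
    · exact .inl ⟨⟨b, hfab⟩, (hs.hF f hf).right_mem_vtx hfab⟩
    · have hrest : gluedEdge Ep (F \ {f}) a b := hab.imp_right fun ⟨g, hg, hgab⟩ =>
        ⟨g, ⟨hg, fun hgf => hfab (Set.mem_singleton_iff.mp hgf ▸ hgab)⟩, hgab⟩
      exact .inr ⟨⟨b, hrest⟩, a, (hs.mono Set.sdiff_subset).gluedEdge_symm hrest⟩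

end GluingSetup

theorem gluing_floppiness_bound₁_general {E : X → X → Prop} {d : X → X → ℝ} {P Q : Set X} {x y : X}
    (h : IsGraphPseudometric E d) (hPQ : IsSeparation E P Q) (hx : x ∈ P) (hy : y ∈ Q) :
    min (Lam E d x (P ∩ Q)) ((1 / 2) * Lam E d y (P ∩ Q)) ≤ hatd E d x y - checkd E d x y := by
  have hΛy : 0 ≤ Lam E d y (P ∩ Q) :=
    h.lam_nonneg (Set.inter_subset_left.trans hPQ.left_subset) (hPQ.right_subset hy)
  have hxy : (1 / 2) * Lam E d y (P ∩ Q) ≤ hatd E d x y := by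
    rw [Set.inter_comm, h.hatd_comm (hPQ.left_subset hx) (hPQ.right_subset hy)]
    linarith [hPQ.symm.lam_inter_le_two_mul_hatd h hy hx]
  have hminx := min_le_left (Lam E d x (P ∩ Q)) ((1 / 2) * Lam E d y (P ∩ Q))
  have hminy := min_le_right (Lam E d x (P ∩ Q)) ((1 / 2) * Lam E d y (P ∩ Q))
  refine le_sub_comm.mp (checkd_le (by linarith) fun a b hab => ?_)
  rw [h.edge_eq hab]
  rcases hPQ.edge hab with ⟨ha, hb⟩ | ⟨ha, hb⟩
  · linarith [hPQ.hatd_sub_sub_le_of_mem_left h hx hy ha hb]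
  · linarith [hPQ.hatd_sub_sub_le_of_mem_right h hx hy ha hb]

/-- In the gluing setup, for `f ∈ 𝔉`, `x ∈ V_f \ V_p` and
`y ∈ V_p \ V_f`: `d̂(x,y) − ď(x,y) ≥ min {Λ(x; V_f ∩ V_p), (1/2)·Λ(y; V_p ∩ V_f)}`. -/
theorem gluing_floppiness_bound₁ (Ep : X → X → Prop) (wp : X → X → ℝ)
    (F : Set ((X → X → Prop) × (X → X → ℝ))) (wd : X → X → ℝ)
    (hs : GluingSetup Ep wp F wd)
    (f : (X → X → Prop) × (X → X → ℝ)) (hf : f ∈ F)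
    (x : X) (hx : x ∈ Vtx f.1 \ Vtx Ep) (y : X) (hy : y ∈ Vtx Ep \ Vtx f.1) :
    min (Lam (gluedEdge Ep F) wd x (Vtx f.1 ∩ Vtx Ep))
        ((1 / 2) * Lam (gluedEdge Ep F) wd y (Vtx Ep ∩ Vtx f.1)) ≤
      hatd (gluedEdge Ep F) wd x y - checkd (gluedEdge Ep F) wd x y := by
  rw [Set.inter_comm (Vtx Ep), ← hs.inter_vtx_gluedEdge_diff hf]
  exact gluing_floppiness_bound₁_general hs.isGraphPseudometric (hs.isSeparation hf) hx.1
    (hy.1.imp fun _ => .inl)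

end GraphMetricPaper
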